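/- Let K be a Markov kernel on a measurable space X that is reversible with respect to a probability measure π and has absolute spectral gap γ ∈ (0,1]. Let Ω ≥ 1 and let μ̃ be a probability measure that is Ω-warm with respect to π. Let P ≥ 1 be an integer and let (X_1,…,X_P) have the chain law of length P for (K, μ̃). Let G : X → ℝ be measurable with G ≥ 0, ∫ G² dπ < ∞, ∫ G dπ > 0, and Var_π(G) > 0; set χ = √(Var_π(G)) / ∫ G dπ. Then for every β ∈ (0,1) with β ≥ χ/2: P( P^{-1}·Σ_{p=1}^P G(X_p) ≤ (1−β)·∫ G dπ ) ≤ Ω·exp( −(Pγ/2)·min( (β/(2χ) − 1/4)², (β − χ/2)/10 ) ). -/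

import Mathlib

open MeasureTheory

/-- Reversibility of the kernel `K` with respect to `π`. -/
def Reversible {X : Type*} [MeasurableSpace X] (K : X → Measure X) (π : Measure X) : Prop :=
  ∀ A B : Set X, MeasurableSet A → MeasurableSet B →
    ∫⁻ x in A, K x B ∂π = ∫⁻ x in B, K x A ∂π

/-- `K` has absolute spectral gap `γ` (stated with squared `L²(π)` norms). -/
def HasAbsSpectralGap {X : Type*} [MeasurableSpace X] (K : X → Measure X) (π : Measure X)
    (γ : ℝ) : Prop :=
  ∀ h : X → ℝ, MemLp h 2 π → ∫ x, h x ∂π = 0 →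
    ∫ x, (∫ y, h y ∂(K x)) ^ 2 ∂π ≤ (1 - γ) ^ 2 * ∫ x, (h x) ^ 2 ∂π

/-- `μ` is `Ω`-warm with respect to `π`: `μ(A) ≤ Ω π(A)` for all measurable `A`. -/
def IsWarm {X : Type*} [MeasurableSpace X] (μ π : Measure X) (ω : ℝ) : Prop :=
  ∀ A : Set X, MeasurableSet A → μ A ≤ ENNReal.ofReal ω * π A

/-- The law of `(X_1, …, X_{n+1})` for a Markov chain with kernel `K` and initial
distribution `μ`. -/
noncomputable def chainLaw {X : Type*} [MeasurableSpace X] (K : X → Measure X)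
    (μ : Measure X) : (n : ℕ) → Measure (Fin (n + 1) → X)
  | 0 => μ.map (fun x => fun _ => x)
  | n + 1 => (chainLaw K μ n).bind (fun xs => (K (xs (Fin.last n))).map (Fin.snoc xs))

/-!
A kernel `K` with absolute spectral gap `γ` satisfies `2 ⟨f, K g⟩ ≤ Q f + Q g` with
`Q f = ⟨f, ((1 - γ) I + γ Π) f⟩`, `Π f = ∫ f dπ`. Let `u ≤ 1 / 2` be centred under `π`. For
`D = exp (γ u / 2)`, Cauchy–Schwarz against a weight `ρ` with `∫ ρ⁻¹ dπ ≤ 1` gives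
`Q (D f) ≤ ‖D² (1 - γ + γ ρ)‖_∞ ‖f‖²`, and `ρ = 1 + 2 Var u - (1 + 2 γ Var u) u` makes the
constant at most `L = 1 + 2 γ Var u`. Hence `f ↦ D K (D f)` has norm at most `L`, the exponential
moment of `γ ∑ u (X_p)` over `P` steps is at most `Ω L ^ P`, and Chernoff's bound with
`u = s (1 - G / ∫ G dπ)` followed by a choice of `s ∈ [0, 1 / 2]` yields the tail.
-/

open ProbabilityTheory
open scoped ENNReal

section General

variable {X : Type*} [MeasurableSpace X]

lemma sq_lintegral_mul_le {μ : Measure X} {f g : X → ℝ≥0∞} (hf : AEMeasurable f μ)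
    (hg : AEMeasurable g μ) :
    (∫⁻ x, f x * g x ∂μ) ^ 2 ≤ (∫⁻ x, f x ^ 2 ∂μ) * ∫⁻ x, g x ^ 2 ∂μ := by
  have holder := ENNReal.lintegral_mul_le_Lp_mul_Lq μ Real.HolderConjugate.two_two hf hg
  simp only [Pi.mul_apply, ENNReal.rpow_two] at holder
  calc (∫⁻ x, f x * g x ∂μ) ^ 2
      ≤ ((∫⁻ x, f x ^ 2 ∂μ) ^ (1 / 2 : ℝ) * (∫⁻ x, g x ^ 2 ∂μ) ^ (1 / 2 : ℝ)) ^ 2 := by gcongr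
    _ = (∫⁻ x, f x ^ 2 ∂μ) * ∫⁻ x, g x ^ 2 ∂μ := by
        rw [mul_pow, ← ENNReal.rpow_mul_natCast, ← ENNReal.rpow_mul_natCast]
        norm_num

lemma memLp_two_toReal {μ : Measure X} {f : X → ℝ≥0∞} (hf : AEMeasurable f μ)
    (hf_sq : ∫⁻ x, f x ^ 2 ∂μ ≠ ∞) : MemLp (fun x => (f x).toReal) 2 μ := by
  rw [memLp_two_iff_integrable_sq hf.ennreal_toReal.aestronglyMeasurable]
  simpa only [ENNReal.toReal_pow] using
    integrable_toReal_of_lintegral_ne_top (hf.pow_const 2) hf_sq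

lemma covariance_sq_le_variance_mul {μ : Measure X} [IsFiniteMeasure μ] {f g : X → ℝ}
    (hf : MemLp f 2 μ) (hg : MemLp g 2 μ) : cov[f, g; μ] ^ 2 ≤ Var[f; μ] * Var[g; μ] := by
  have nonneg (t : ℝ) : 0 ≤ Var[f; μ] * (t * t) + (-2 * cov[f, g; μ]) * t + Var[g; μ] := by
    have expand := variance_fun_sub (hf.const_mul t) hg
    rw [variance_const_mul, covariance_const_mul_left] at expand
    linarith [variance_nonneg (fun x => t * f x - g x) μ]
  have := discrim_le_zero nonneg
  rw [discrim] at this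
  linarith

lemma memLp_integral_kernel {Y E : Type*} [MeasurableSpace Y] [NormedAddCommGroup E]
    [NormedSpace ℝ E] {κ : Kernel X Y} [IsMarkovKernel κ] {μ : Measure X} {p : ℝ≥0∞}
    (hp : 1 ≤ p) (hp_top : p ≠ ∞) {f : Y → E} (hf : MemLp f p (κ ∘ₘ μ)) :
    MemLp (fun x => ∫ y, f y ∂κ x) p μ := by
  have hp₀ : p ≠ 0 := (zero_lt_one.trans_le hp).ne'
  have measurable : AEStronglyMeasurable (fun x => ∫ y, f y ∂κ x) μ := by
    have := hf.aestronglyMeasurable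
    rw [Measure.comp_eq_comp_const_apply] at this
    simpa only [Kernel.const_apply] using this.integral_kernel_comp
  have jensen : ∀ᵐ x ∂μ, ‖∫ y, f y ∂κ x‖ₑ ^ p.toReal ≤ ∫⁻ y, ‖f y‖ₑ ^ p.toReal ∂κ x := by
    filter_upwards [Measure.ae_ae_of_ae_comp hf.aestronglyMeasurable.ae_eq_mk] with x hx
    have hfx : AEStronglyMeasurable f (κ x) :=
      ⟨_, hf.aestronglyMeasurable.stronglyMeasurable_mk, hx⟩
    calc ‖∫ y, f y ∂κ x‖ₑ ^ p.toReal ≤ eLpNorm f 1 (κ x) ^ p.toReal := by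
          rw [eLpNorm_one_eq_lintegral_enorm]
          gcongr
          exact enorm_integral_le_lintegral_enorm f
      _ ≤ eLpNorm f p (κ x) ^ p.toReal := by
          gcongr
          exact eLpNorm_le_eLpNorm_of_exponent_le hp hfx
      _ = ∫⁻ y, ‖f y‖ₑ ^ p.toReal ∂κ x := by
          rw [eLpNorm_eq_lintegral_rpow_enorm_toReal hp₀ hp_top, ← ENNReal.rpow_mul, one_div,
            inv_mul_cancel₀ (ENNReal.toReal_pos hp₀ hp_top).ne', ENNReal.rpow_one]
  refine ⟨measurable, (eLpNorm_lt_top_iff_lintegral_rpow_enorm_lt_top hp₀ hp_top).2 ?_⟩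
  calc ∫⁻ x, ‖∫ y, f y ∂κ x‖ₑ ^ p.toReal ∂μ
      ≤ ∫⁻ x, ∫⁻ y, ‖f y‖ₑ ^ p.toReal ∂κ x ∂μ := lintegral_mono_ae jensen
    _ = ∫⁻ y, ‖f y‖ₑ ^ p.toReal ∂(κ ∘ₘ μ) := by
        rw [Measure.lintegral_bind κ.aemeasurable (hf.aestronglyMeasurable.enorm.pow_const _)]
    _ < ∞ := (eLpNorm_lt_top_iff_lintegral_rpow_enorm_lt_top hp₀ hp_top).1 hf.eLpNorm_lt_top

lemma integral_integral_kernel {Y E : Type*} [MeasurableSpace Y] [NormedAddCommGroup E]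
    [NormedSpace ℝ E] {κ : Kernel X Y} [IsSFiniteKernel κ] {μ : Measure X} [SFinite μ]
    {f : Y → E} (hf : Integrable f (κ ∘ₘ μ)) :
    ∫ x, ∫ y, f y ∂κ x ∂μ = ∫ y, f y ∂(κ ∘ₘ μ) := by
  rw [Measure.comp_eq_comp_const_apply] at hf ⊢
  simpa only [Kernel.const_apply] using (Kernel.integral_comp hf).symm

lemma ofReal_integral_kernel_mul_toReal_ae {Y : Type*} [MeasurableSpace Y] {κ : Kernel X Y}
    [IsSFiniteKernel κ] {μ : Measure X} [SFinite μ] {D : Y → ℝ} {g : Y → ℝ≥0∞}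
    (hD : ∀ y, 0 ≤ D y) (hDg : Integrable (fun y => D y * (g y).toReal) (κ ∘ₘ μ))
    (hg : ∀ᵐ y ∂(κ ∘ₘ μ), g y ≠ ∞) :
    ∀ᵐ x ∂μ, ENNReal.ofReal (∫ y, D y * (g y).toReal ∂κ x) =
      ∫⁻ y, ENNReal.ofReal (D y) * g y ∂κ x := by
  filter_upwards [Measure.ae_ae_of_ae_comp hg,
    Measure.ae_integrable_of_integrable_comp hDg] with x hgx hDgx
  rw [ofReal_integral_eq_lintegral_ofReal hDgx
    (ae_of_all _ fun y => mul_nonneg (hD y) ENNReal.toReal_nonneg)]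
  exact lintegral_congr_ae <| hgx.mono fun y hy => by
    simp only [ENNReal.ofReal_mul (hD y), ENNReal.ofReal_toReal hy]

end General

section SpectralGap

variable {X : Type*} [MeasurableSpace X]

/-- The quadratic form `f ↦ ⟨f, ((1 - γ) I + γ Π) f⟩` on `L²(π)`, where `Π f = ∫ f dπ`: the form of
the chain that stays put with probability `1 - γ` and resamples from `π` with probability `γ`.
It serves to dominate a kernel with absolute spectral gap `γ`. -/
noncomputable def resamplingForm (π : Measure X) (γ : ℝ) (f : X → ℝ) : ℝ :=
  (1 - γ) * ∫ x, f x ^ 2 ∂π + γ * (∫ x, f x ∂π) ^ 2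

variable {π : Measure X} [IsProbabilityMeasure π] {γ : ℝ}

lemma resamplingForm_eq_variance_add {f : X → ℝ} (hf : MemLp f 2 π) :
    resamplingForm π γ f = (1 - γ) * Var[f; π] + (∫ x, f x ∂π) ^ 2 := by
  rw [variance_eq_sub hf, resamplingForm]
  simp only [Pi.pow_apply]
  ring

lemma sq_integral_le_resamplingForm (hγ : γ ≤ 1) {f : X → ℝ} (hf : MemLp f 2 π) :
    (∫ x, f x ∂π) ^ 2 ≤ resamplingForm π γ f := by
  rw [resamplingForm_eq_variance_add hf]
  exact le_add_of_nonneg_left (mul_nonneg (sub_nonneg.2 hγ) (variance_nonneg f π))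

lemma resamplingForm_mul_le (hγ : 0 ≤ γ) {L : ℝ} {D ρ : X → ℝ} (hD : MemLp D ∞ π)
    (hρ_pos : ∀ᵐ x ∂π, 0 < ρ x) (hρ_int : Integrable (fun x => (ρ x)⁻¹) π)
    (hρ : ∫ x, (ρ x)⁻¹ ∂π ≤ 1) (hDρ : ∀ᵐ x ∂π, D x ^ 2 * (1 - γ + γ * ρ x) ≤ L)
    {f : X → ℝ} (hf : MemLp f 2 π) :
    resamplingForm π γ (fun x => D x * f x) ≤ L * ∫ x, f x ^ 2 ∂π := by
  have hDf : MemLp (fun x => D x * f x) 2 π := hf.mul hD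
  set c := ∫ x, D x * f x ∂π with hc
  have pointwise : ∀ᵐ x ∂π, (1 - γ) * (D x * f x) ^ 2 + 2 * γ * c * (D x * f x) ≤
      L * f x ^ 2 + γ * c ^ 2 * (ρ x)⁻¹ := by
    filter_upwards [hρ_pos, hDρ] with x hx hDx
    have amgm : 2 * (c * (D x * f x)) ≤ ρ x * (D x * f x) ^ 2 + c ^ 2 * (ρ x)⁻¹ := by
      apply two_mul_le_add_of_sq_le_mul (by positivity) (by positivity)
      field_simp
      exact le_rfl
    nlinarith [mul_le_mul_of_nonneg_left amgm hγ, mul_le_mul_of_nonneg_right hDx (sq_nonneg (f x))]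
  have integrated := integral_mono_ae
    ((hDf.integrable_sq.const_mul _).add ((hDf.integrable one_le_two).const_mul _))
    ((hf.integrable_sq.const_mul _).add (hρ_int.const_mul _)) pointwise
  simp only [Pi.add_apply] at integrated
  rw [integral_add (hDf.integrable_sq.const_mul _) ((hDf.integrable one_le_two).const_mul _),
    integral_add (hf.integrable_sq.const_mul _) (hρ_int.const_mul _)] at integrated
  simp only [integral_const_mul, ← hc] at integrated
  rw [resamplingForm, ← hc]
  nlinarith [mul_le_mul_of_nonneg_left hρ (mul_nonneg hγ (sq_nonneg c))]

variable {κ : Kernel X X} [IsMarkovKernel κ]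

lemma HasAbsSpectralGap.variance_integral_kernel_le (hgap : HasAbsSpectralGap κ π γ)
    (hinv : κ.Invariant π) {g : X → ℝ} (hg : MemLp g 2 π) :
    Var[fun x => ∫ y, g y ∂κ x; π] ≤ (1 - γ) ^ 2 * Var[g; π] := by
  have hg_comp : MemLp g 2 (κ ∘ₘ π) := hinv.def.symm ▸ hg
  have hg_int : Integrable g (κ ∘ₘ π) := hg_comp.integrable one_le_two
  have mean : ∫ x, ∫ y, g y ∂κ x ∂π = ∫ x, g x ∂π := by
    rw [integral_integral_kernel hg_int, hinv.def]
  have centered : ∫ x, (g x - ∫ z, g z ∂π) ∂π = 0 := by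
    rw [integral_sub (hg.integrable one_le_two) (integrable_const _)]
    simp
  have kernel_sub : ∀ᵐ x ∂π,
      ∫ y, (g y - ∫ z, g z ∂π) ∂κ x = ∫ y, g y ∂κ x - ∫ z, g z ∂π := by
    filter_upwards [Measure.ae_integrable_of_integrable_comp hg_int] with x hx
    rw [integral_sub hx (integrable_const _)]
    simp
  have hKg := memLp_integral_kernel one_le_two ENNReal.ofNat_ne_top hg_comp
  rw [variance_eq_integral hKg.aemeasurable, variance_eq_integral hg.aemeasurable, mean]
  calc ∫ x, (∫ y, g y ∂κ x - ∫ z, g z ∂π) ^ 2 ∂π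
      = ∫ x, (∫ y, (g y - ∫ z, g z ∂π) ∂κ x) ^ 2 ∂π :=
        integral_congr_ae (kernel_sub.mono fun x hx => by simp only [hx])
    _ ≤ (1 - γ) ^ 2 * ∫ x, (g x - ∫ z, g z ∂π) ^ 2 ∂π :=
        hgap _ (hg.sub (memLp_const _)) centered

lemma HasAbsSpectralGap.two_mul_integral_mul_integral_kernel_le
    (hgap : HasAbsSpectralGap κ π γ) (hinv : κ.Invariant π) (hγ : γ ≤ 1)
    {f g : X → ℝ} (hf : MemLp f 2 π) (hg : MemLp g 2 π) :
    2 * ∫ x, f x * ∫ y, g y ∂κ x ∂π ≤ resamplingForm π γ f + resamplingForm π γ g := by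
  have hg_comp : MemLp g 2 (κ ∘ₘ π) := hinv.def.symm ▸ hg
  have hKg := memLp_integral_kernel one_le_two ENNReal.ofNat_ne_top hg_comp
  have mean : ∫ x, ∫ y, g y ∂κ x ∂π = ∫ x, g x ∂π := by
    rw [integral_integral_kernel (hg_comp.integrable one_le_two), hinv.def]
  have hγ₀ : 0 ≤ 1 - γ := sub_nonneg.2 hγ
  have cov_sq : cov[f, fun x => ∫ y, g y ∂κ x; π] ^ 2 ≤
      ((1 - γ) * Var[f; π]) * ((1 - γ) * Var[g; π]) :=
    calc cov[f, fun x => ∫ y, g y ∂κ x; π] ^ 2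
        ≤ Var[f; π] * Var[fun x => ∫ y, g y ∂κ x; π] := covariance_sq_le_variance_mul hf hKg
      _ ≤ Var[f; π] * ((1 - γ) ^ 2 * Var[g; π]) :=
          mul_le_mul_of_nonneg_left (hgap.variance_integral_kernel_le hinv hg)
            (variance_nonneg f π)
      _ = ((1 - γ) * Var[f; π]) * ((1 - γ) * Var[g; π]) := by ring
  have cov_le := two_mul_le_add_of_sq_le_mul (mul_nonneg hγ₀ (variance_nonneg f π))
    (mul_nonneg hγ₀ (variance_nonneg g π)) cov_sq
  rw [covariance_eq_sub hf hKg, mean] at cov_le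
  simp only [Pi.mul_apply] at cov_le
  rw [resamplingForm_eq_variance_add hf, resamplingForm_eq_variance_add hg]
  linarith [two_mul_le_add_sq (∫ x, f x ∂π) (∫ x, g x ∂π)]

-- Apply the hypothesis on the form to `F := D * K (D g)`, paired with `L g`: the pairing is
-- `L ‖F‖²`, and the bounds read `L ‖F‖²` and `L³ ‖g‖²`.
lemma HasAbsSpectralGap.integral_sq_mul_integral_kernel_mul_le
    (hgap : HasAbsSpectralGap κ π γ) (hinv : κ.Invariant π) (hγ : γ ≤ 1)
    {L : ℝ} (hL : 0 < L) {D : X → ℝ} (hD : MemLp D ∞ π)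
    (hform : ∀ f : X → ℝ, MemLp f 2 π →
      resamplingForm π γ (fun x => D x * f x) ≤ L * ∫ x, f x ^ 2 ∂π)
    {g : X → ℝ} (hg : MemLp g 2 π) :
    ∫ x, (D x * ∫ y, D y * g y ∂κ x) ^ 2 ∂π ≤ L ^ 2 * ∫ x, g x ^ 2 ∂π := by
  set F : X → ℝ := fun x => D x * ∫ y, D y * g y ∂κ x with hF_def
  have hDg : MemLp (fun x => D x * g x) 2 π := hg.mul hD
  have hF : MemLp F 2 π :=
    (memLp_integral_kernel one_le_two ENNReal.ofNat_ne_top (hinv.def.symm ▸ hDg)).mul hD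
  have pairing : ∫ x, (D x * F x) * ∫ y, D y * (L * g y) ∂κ x ∂π = L * ∫ x, F x ^ 2 ∂π := by
    rw [← integral_const_mul]
    congr 1 with x
    simp only [mul_left_comm _ L, integral_const_mul, hF_def]
    ring
  have bound := hgap.two_mul_integral_mul_integral_kernel_le hinv hγ (hF.mul hD)
    ((hg.const_mul L).mul hD)
  have form_F := hform F hF
  have form_g := hform _ (hg.const_mul L)
  simp only [mul_pow, integral_const_mul] at form_g
  change 2 * ∫ x, (D x * F x) * ∫ y, D y * (L * g y) ∂κ x ∂π ≤
    resamplingForm π γ (fun x => D x * F x) + resamplingForm π γ (fun x => D x * (L * g x)) at bound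
  rw [pairing] at bound
  nlinarith

lemma HasAbsSpectralGap.lintegral_sq_mul_lintegral_kernel_mul_le
    (hgap : HasAbsSpectralGap κ π γ) (hinv : κ.Invariant π) (hγ : γ ≤ 1)
    {L : ℝ} (hL : 0 < L) {D : X → ℝ} (hD_nonneg : ∀ x, 0 ≤ D x) (hD : MemLp D ∞ π)
    (hform : ∀ f : X → ℝ, MemLp f 2 π →
      resamplingForm π γ (fun x => D x * f x) ≤ L * ∫ x, f x ^ 2 ∂π)
    {g : X → ℝ≥0∞} (hg : Measurable g) :
    ∫⁻ x, (ENNReal.ofReal (D x) * ∫⁻ y, ENNReal.ofReal (D y) * g y ∂κ x) ^ 2 ∂π ≤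
      ENNReal.ofReal L ^ 2 * ∫⁻ x, g x ^ 2 ∂π := by
  rcases eq_or_ne (∫⁻ x, g x ^ 2 ∂π) ∞ with hg_top | hg_fin
  · rw [hg_top, ENNReal.mul_top (pow_ne_zero 2 (ENNReal.ofReal_pos.2 hL).ne')]
    exact le_top
  have hg_ae : ∀ᵐ x ∂π, g x ≠ ∞ :=
    (ae_lt_top (hg.pow_const 2) hg_fin).mono fun x hx h => by simp [h] at hx
  have hg_sq : ∫⁻ x, ENNReal.ofReal ((g x).toReal ^ 2) ∂π = ∫⁻ x, g x ^ 2 ∂π :=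
    lintegral_congr_ae <| hg_ae.mono fun x hx => by
      simp only [ENNReal.ofReal_pow ENNReal.toReal_nonneg, ENNReal.ofReal_toReal hx]
  have hg_real := memLp_two_toReal hg.aemeasurable hg_fin
  have hDg : MemLp (fun x => D x * (g x).toReal) 2 (κ ∘ₘ π) := hinv.def.symm ▸ hg_real.mul hD
  have hF : MemLp (fun x => D x * ∫ y, D y * (g y).toReal ∂κ x) 2 π :=
    (memLp_integral_kernel one_le_two ENNReal.ofNat_ne_top hDg).mul hD
  have real_eq := ofReal_integral_kernel_mul_toReal_ae hD_nonneg (hDg.integrable one_le_two)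
    (hinv.def.symm ▸ hg_ae)
  have hF_nonneg (x : X) : 0 ≤ D x * ∫ y, D y * (g y).toReal ∂κ x :=
    mul_nonneg (hD_nonneg x)
      (integral_nonneg fun y => mul_nonneg (hD_nonneg y) ENNReal.toReal_nonneg)
  calc ∫⁻ x, (ENNReal.ofReal (D x) * ∫⁻ y, ENNReal.ofReal (D y) * g y ∂κ x) ^ 2 ∂π
      = ∫⁻ x, ENNReal.ofReal ((D x * ∫ y, D y * (g y).toReal ∂κ x) ^ 2) ∂π :=
        lintegral_congr_ae <| real_eq.mono fun x hx => by
          simp only [ENNReal.ofReal_pow (hF_nonneg x), ENNReal.ofReal_mul (hD_nonneg x), hx]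
    _ = ENNReal.ofReal (∫ x, (D x * ∫ y, D y * (g y).toReal ∂κ x) ^ 2 ∂π) :=
        (ofReal_integral_eq_lintegral_ofReal hF.integrable_sq
          (ae_of_all _ fun x => sq_nonneg _)).symm
    _ ≤ ENNReal.ofReal (L ^ 2 * ∫ x, (g x).toReal ^ 2 ∂π) :=
        ENNReal.ofReal_le_ofReal
          (hgap.integral_sq_mul_integral_kernel_mul_le hinv hγ hL hD hform hg_real)
    _ = ENNReal.ofReal L ^ 2 * ∫⁻ x, g x ^ 2 ∂π := by
        rw [ENNReal.ofReal_mul (sq_nonneg L), ENNReal.ofReal_pow hL.le,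
          ofReal_integral_eq_lintegral_ofReal hg_real.integrable_sq
            (ae_of_all _ fun x => sq_nonneg _), hg_sq]

lemma integral_sq_le_of_resamplingForm_mul_le (hγ : γ ≤ 1) {L : ℝ} (hL : 0 ≤ L) {D : X → ℝ}
    (hD : MemLp D ∞ π)
    (hform : ∀ f : X → ℝ, MemLp f 2 π →
      resamplingForm π γ (fun x => D x * f x) ≤ L * ∫ x, f x ^ 2 ∂π) :
    ∫ x, D x ^ 2 ∂π ≤ L := by
  have hD₂ : MemLp D 2 π := hD.mono_exponent le_top
  have sq_le : (∫ x, D x * D x ∂π) ^ 2 ≤ L * ∫ x, D x ^ 2 ∂π :=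
    (sq_integral_le_resamplingForm hγ (hD₂.mul hD)).trans (hform D hD₂)
  simp only [← pow_two] at sq_le
  by_contra! h
  nlinarith

end SpectralGap

section Chain

variable {X : Type*} [MeasurableSpace X]

lemma measurable_finSnoc (n : ℕ) :
    Measurable fun p : (Fin n → X) × X => (Fin.snoc p.1 p.2 : Fin (n + 1) → X) := by
  refine measurable_pi_lambda _ fun i => ?_
  induction i using Fin.lastCases with
  | last => simpa only [Fin.snoc_last] using measurable_snd
  | cast i => simp only [Fin.snoc_castSucc]; fun_prop

lemma measurable_finSnoc_right {n : ℕ} (xs : Fin n → X) :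
    Measurable (Fin.snoc (α := fun _ => X) xs) :=
  (measurable_finSnoc n).comp measurable_prodMk_left

variable {κ : Kernel X X} [IsMarkovKernel κ]

lemma measurable_map_finSnoc_kernel (n : ℕ) :
    Measurable fun xs : Fin (n + 1) → X =>
      (κ (xs (Fin.last n))).map (Fin.snoc (α := fun _ => X) xs) := by
  refine Measure.measurable_of_measurable_coe _ fun s hs => ?_
  have slice (xs : Fin (n + 1) → X) :
      (κ (xs (Fin.last n))).map (Fin.snoc (α := fun _ => X) xs) s =
        κ.comap _ (measurable_pi_apply (Fin.last n)) xs
          (Prod.mk xs ⁻¹' ((fun p => Fin.snoc (α := fun _ => X) p.1 p.2) ⁻¹' s)) := by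
    rw [Measure.map_apply (measurable_finSnoc_right xs) hs]
    rfl
  simp only [slice]
  exact Kernel.measurable_kernel_prodMk_left (measurable_finSnoc (n + 1) hs)

lemma lintegral_chainLaw_succ (μ : Measure X) (n : ℕ) {f : (Fin (n + 2) → X) → ℝ≥0∞}
    (hf : Measurable f) :
    ∫⁻ xs, f xs ∂chainLaw κ μ (n + 1) =
      ∫⁻ xs, ∫⁻ y, f (Fin.snoc xs y) ∂κ (xs (Fin.last n)) ∂chainLaw κ μ n := by
  rw [chainLaw, Measure.lintegral_bind (measurable_map_finSnoc_kernel n).aemeasurable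
    hf.aemeasurable]
  congr 1 with xs
  exact lintegral_map hf (measurable_finSnoc_right xs)

lemma IsWarm.le_smul {μ π : Measure X} {ω : ℝ} (h : IsWarm μ π ω) :
    μ ≤ ENNReal.ofReal ω • π :=
  Measure.le_iff.2 h

variable {π μ : Measure X} {c C : ℝ≥0∞} {d : X → ℝ≥0∞}

lemma sq_lintegral_chainLaw_prod_mul_le (hμ : μ ≤ c • π) (hd : Measurable d)
    (hC : ∀ g : X → ℝ≥0∞, Measurable g →
      ∫⁻ x, (d x * ∫⁻ y, d y * g y ∂κ x) ^ 2 ∂π ≤ C ^ 2 * ∫⁻ x, g x ^ 2 ∂π)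
    (n : ℕ) {h : X → ℝ≥0∞} (hh : Measurable h) :
    (∫⁻ xs, (∏ i, d (xs i) ^ 2) * h (xs (Fin.last n)) ∂chainLaw κ μ n) ^ 2 ≤
      (c * C ^ n) ^ 2 * ((∫⁻ x, d x ^ 2 ∂π) * ∫⁻ x, (d x * h x) ^ 2 ∂π) := by
  induction n generalizing h with
  | zero =>
    have one_step : ∫⁻ xs, (∏ i, d (xs i) ^ 2) * h (xs (Fin.last 0)) ∂chainLaw κ μ 0 =
        ∫⁻ x, d x * (d x * h x) ∂μ := by
      rw [chainLaw, lintegral_map (by fun_prop) (by fun_prop)]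
      simp only [Fin.prod_univ_succ, Fin.prod_univ_zero, mul_one, pow_two, mul_assoc]
    calc (∫⁻ xs, (∏ i, d (xs i) ^ 2) * h (xs (Fin.last 0)) ∂chainLaw κ μ 0) ^ 2
        ≤ (c * ∫⁻ x, d x * (d x * h x) ∂π) ^ 2 := by
          rw [one_step]
          gcongr
          exact (lintegral_mono' hμ le_rfl).trans_eq (lintegral_smul_measure _ _)
      _ ≤ c ^ 2 * ((∫⁻ x, d x ^ 2 ∂π) * ∫⁻ x, (d x * h x) ^ 2 ∂π) := by
          rw [mul_pow]
          gcongr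
          exact sq_lintegral_mul_le hd.aemeasurable (hd.mul hh).aemeasurable
      _ = _ := by rw [pow_zero, mul_one]
  | succ n ih =>
    have last_step : ∫⁻ xs, (∏ i, d (xs i) ^ 2) * h (xs (Fin.last (n + 1)))
          ∂chainLaw κ μ (n + 1) =
        ∫⁻ xs, (∏ i, d (xs i) ^ 2) * ∫⁻ y, d y * (d y * h y) ∂κ (xs (Fin.last n))
          ∂chainLaw κ μ n := by
      rw [lintegral_chainLaw_succ μ n (by fun_prop)]
      congr 1 with xs
      rw [← lintegral_const_mul _ (by fun_prop)]
      congr 1 with y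
      simp only [Fin.prod_univ_castSucc (n := n + 1), Fin.snoc_castSucc, Fin.snoc_last]
      ring
    rw [last_step]
    calc _ ≤ (c * C ^ n) ^ 2 * ((∫⁻ x, d x ^ 2 ∂π) *
            ∫⁻ x, (d x * ∫⁻ y, d y * (d y * h y) ∂κ x) ^ 2 ∂π) :=
          ih (Measurable.lintegral_kernel (by fun_prop))
      _ ≤ (c * C ^ n) ^ 2 * ((∫⁻ x, d x ^ 2 ∂π) *
            (C ^ 2 * ∫⁻ x, (d x * h x) ^ 2 ∂π)) := by
          gcongr
          exact hC _ (hd.mul hh)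
      _ = (c * C ^ (n + 1)) ^ 2 * ((∫⁻ x, d x ^ 2 ∂π) * ∫⁻ x, (d x * h x) ^ 2 ∂π) := by ring

lemma lintegral_chainLaw_prod_sq_le (hμ : μ ≤ c • π) (hd : Measurable d)
    (hC : ∀ g : X → ℝ≥0∞, Measurable g →
      ∫⁻ x, (d x * ∫⁻ y, d y * g y ∂κ x) ^ 2 ∂π ≤ C ^ 2 * ∫⁻ x, g x ^ 2 ∂π) (n : ℕ) :
    ∫⁻ xs, ∏ i, d (xs i) ^ 2 ∂chainLaw κ μ n ≤ c * C ^ n * ∫⁻ x, d x ^ 2 ∂π := by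
  have sq_le := sq_lintegral_chainLaw_prod_mul_le hμ hd hC n measurable_one
  simp only [Pi.one_apply, mul_one, ← pow_two, ← mul_pow] at sq_le
  exact (ENNReal.pow_le_pow_left_iff two_ne_zero).1 sq_le

end Chain

section Concentration

lemma inv_one_sub_le {z : ℝ} (hz : z ≤ 1 / 2) : (1 - z)⁻¹ ≤ 1 + z + 2 * z ^ 2 := by
  rw [inv_le_iff_one_le_mul₀ (by linarith)]
  nlinarith [mul_nonneg (sq_nonneg z) (sub_nonneg.2 hz)]

variable {X : Type*} [MeasurableSpace X] {π : Measure X} {u : X → ℝ} {γ : ℝ}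

lemma memLp_top_exp_half_mul (hu : Measurable u) (hu_le : ∀ᵐ x ∂π, u x ≤ 1 / 2) (hγ : 0 ≤ γ) :
    MemLp (fun x => Real.exp (γ * u x / 2)) ∞ π := by
  refine memLp_top_of_bound (by fun_prop) (Real.exp (γ * (1 / 2) / 2)) (hu_le.mono fun x hx => ?_)
  rw [Real.norm_of_nonneg (Real.exp_nonneg _)]
  gcongr

variable [IsProbabilityMeasure π]

lemma integrable_inv_one_sub (hu : AEStronglyMeasurable u π) (hu_le : ∀ᵐ x ∂π, u x ≤ 1 / 2) :
    Integrable (fun x => (1 - u x)⁻¹) π := by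
  refine Integrable.of_bound (aemeasurable_const.sub hu.aemeasurable).inv.aestronglyMeasurable
    2 (hu_le.mono fun x hx => ?_)
  rw [Real.norm_of_nonneg (inv_nonneg.2 (by linarith))]
  exact inv_le_of_inv_le₀ two_pos (by linarith)

lemma integral_inv_one_sub_le (hu : MemLp u 2 π) (hu_mean : ∫ x, u x ∂π = 0)
    (hu_le : ∀ᵐ x ∂π, u x ≤ 1 / 2) : ∫ x, (1 - u x)⁻¹ ∂π ≤ 1 + 2 * Var[u; π] := by
  have hu_int := hu.integrable one_le_two
  have affine_int : Integrable (fun x => 1 + u x) π := (integrable_const 1).add hu_int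
  calc ∫ x, (1 - u x)⁻¹ ∂π ≤ ∫ x, (1 + u x + 2 * u x ^ 2) ∂π :=
        integral_mono_ae (integrable_inv_one_sub hu.aestronglyMeasurable hu_le)
          (affine_int.add (hu.integrable_sq.const_mul 2))
          (hu_le.mono fun x hx => inv_one_sub_le hx)
    _ = 1 + 2 * Var[u; π] := by
        rw [integral_add affine_int (hu.integrable_sq.const_mul 2),
          integral_add (integrable_const 1) hu_int, integral_const_mul, hu_mean,
          variance_of_integral_eq_zero hu.aemeasurable hu_mean]
        simp

-- With `A = 1 + 2 Var u` and `L = 1 + 2 γ Var u`, the weight `ρ = A - L u` makes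
-- `1 - γ + γ ρ = L (1 - γ u)`, and `1 - γ u ≤ exp (-γ u)`.
lemma resamplingForm_exp_half_mul_le (hγ : γ ∈ Set.Icc 0 1) (hu_meas : Measurable u)
    (hu : MemLp u 2 π) (hu_mean : ∫ x, u x ∂π = 0) (hu_le : ∀ᵐ x ∂π, u x ≤ 1 / 2)
    {f : X → ℝ} (hf : MemLp f 2 π) :
    resamplingForm π γ (fun x => Real.exp (γ * u x / 2) * f x) ≤
      (1 + 2 * γ * Var[u; π]) * ∫ x, f x ^ 2 ∂π := by
  have hV : 0 ≤ Var[u; π] := variance_nonneg u π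
  set A := 1 + 2 * Var[u; π]
  set L := 1 + 2 * γ * Var[u; π]
  have hA : 0 < A := by positivity
  have hL : 0 ≤ L := add_nonneg zero_le_one (mul_nonneg (mul_nonneg two_pos.le hγ.1) hV)
  have ratio_nonneg : 0 ≤ L / A := by positivity
  have ratio_le_one : L / A ≤ 1 := (div_le_one hA).2 (by nlinarith [mul_le_of_le_one_left hV hγ.2])
  have hz_le : ∀ᵐ x ∂π, L / A * u x ≤ 1 / 2 := hu_le.mono fun x hx => by nlinarith
  have factor (x : X) : A - L * u x = A * (1 - L / A * u x) := by field_simp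
  refine resamplingForm_mul_le hγ.1 (memLp_top_exp_half_mul hu_meas hu_le hγ.1)
    (ρ := fun x => A - L * u x) ?_ ?_ ?_ ?_ hf
  · filter_upwards [hz_le] with x hx
    rw [factor]
    exact mul_pos hA (by linarith)
  · simp only [factor, mul_inv]
    exact (integrable_inv_one_sub (hu.aestronglyMeasurable.const_mul _) hz_le).const_mul _
  · simp only [factor, mul_inv, integral_const_mul]
    rw [inv_mul_le_one₀ hA]
    calc ∫ x, (1 - L / A * u x)⁻¹ ∂π ≤ 1 + 2 * Var[fun x => L / A * u x; π] :=
          integral_inv_one_sub_le (hu.const_mul _)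
            (by rw [integral_const_mul, hu_mean, mul_zero]) hz_le
      _ ≤ A := by
          rw [variance_const_mul]
          refine add_le_add_right (mul_le_mul_of_nonneg_left ?_ two_pos.le) 1
          exact mul_le_of_le_one_left hV (pow_le_one₀ ratio_nonneg ratio_le_one)
  · refine ae_of_all _ fun x => ?_
    calc Real.exp (γ * u x / 2) ^ 2 * (1 - γ + γ * (A - L * u x))
        = L * (Real.exp (γ * u x) * (1 - γ * u x)) := by
          rw [← Real.exp_nat_mul, Nat.cast_ofNat, mul_div_cancel₀ _ two_ne_zero]
          ring
      _ ≤ L * (Real.exp (γ * u x) * Real.exp (-(γ * u x))) := by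
          gcongr
          exact Real.one_sub_le_exp_neg _
      _ = L := by rw [← Real.exp_add, add_neg_cancel, Real.exp_zero, mul_one]

variable {κ : Kernel X X} [IsMarkovKernel κ] {μ : Measure X} {c : ℝ≥0∞}

lemma HasAbsSpectralGap.lintegral_chainLaw_exp_sum_le (hgap : HasAbsSpectralGap κ π γ)
    (hinv : κ.Invariant π) (hμ : μ ≤ c • π) (hγ : γ ∈ Set.Icc 0 1) (hu_meas : Measurable u)
    (hu : MemLp u 2 π) (hu_mean : ∫ x, u x ∂π = 0) (hu_le : ∀ᵐ x ∂π, u x ≤ 1 / 2) (n : ℕ) :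
    ∫⁻ xs, ENNReal.ofReal (Real.exp (γ * ∑ i, u (xs i))) ∂chainLaw κ μ n ≤
      c * ENNReal.ofReal ((1 + 2 * γ * Var[u; π]) ^ (n + 1)) := by
  set L := 1 + 2 * γ * Var[u; π]
  have hL : 0 < L := add_pos_of_pos_of_nonneg one_pos
    (mul_nonneg (mul_nonneg two_pos.le hγ.1) (variance_nonneg u π))
  set D : X → ℝ := fun x => Real.exp (γ * u x / 2)
  have hD : MemLp D ∞ π := memLp_top_exp_half_mul hu_meas hu_le hγ.1
  have hform : ∀ f : X → ℝ, MemLp f 2 π →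
      resamplingForm π γ (fun x => D x * f x) ≤ L * ∫ x, f x ^ 2 ∂π :=
    fun _ hf => resamplingForm_exp_half_mul_le hγ hu_meas hu hu_mean hu_le hf
  have hD_sq (x : X) : ENNReal.ofReal (D x) ^ 2 = ENNReal.ofReal (Real.exp (γ * u x)) := by
    rw [← ENNReal.ofReal_pow (Real.exp_nonneg _), ← Real.exp_nat_mul, Nat.cast_ofNat,
      mul_div_cancel₀ _ two_ne_zero]
  have prod_eq (xs : Fin (n + 1) → X) : ENNReal.ofReal (Real.exp (γ * ∑ i, u (xs i))) =
      ∏ i, ENNReal.ofReal (D (xs i)) ^ 2 := by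
    simp only [hD_sq, Finset.mul_sum, Real.exp_sum]
    exact ENNReal.ofReal_prod_of_nonneg fun _ _ => Real.exp_nonneg _
  calc ∫⁻ xs, ENNReal.ofReal (Real.exp (γ * ∑ i, u (xs i))) ∂chainLaw κ μ n
      ≤ c * ENNReal.ofReal L ^ n * ∫⁻ x, ENNReal.ofReal (D x) ^ 2 ∂π := by
        simp only [prod_eq]
        exact lintegral_chainLaw_prod_sq_le hμ (by fun_prop) (fun g hg =>
          hgap.lintegral_sq_mul_lintegral_kernel_mul_le hinv hγ.2 hL
            (fun _ => Real.exp_nonneg _) hD hform hg) n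
    _ = c * ENNReal.ofReal L ^ n * ENNReal.ofReal (∫ x, D x ^ 2 ∂π) := by
        simp only [← ENNReal.ofReal_pow (Real.exp_nonneg _), D]
        rw [ofReal_integral_eq_lintegral_ofReal ((hD.mono_exponent le_top).integrable_sq)
          (ae_of_all _ fun _ => sq_nonneg _)]
    _ ≤ c * ENNReal.ofReal L ^ n * ENNReal.ofReal L := by
        gcongr
        exact integral_sq_le_of_resamplingForm_mul_le hγ.2 hL.le hD hform
    _ = c * ENNReal.ofReal (L ^ (n + 1)) := by
        rw [mul_assoc, ← pow_succ, ENNReal.ofReal_pow hL.le]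

lemma HasAbsSpectralGap.chainLaw_le_sum_le (hgap : HasAbsSpectralGap κ π γ)
    (hinv : κ.Invariant π) (hμ : μ ≤ c • π) (hγ : γ ∈ Set.Icc 0 1) (hu_meas : Measurable u)
    (hu : MemLp u 2 π) (hu_mean : ∫ x, u x ∂π = 0) (hu_le : ∀ᵐ x ∂π, u x ≤ 1 / 2) (n : ℕ)
    (ε : ℝ) :
    chainLaw κ μ n {xs | (n + 1) * ε ≤ ∑ i, u (xs i)} ≤
      c * ENNReal.ofReal (Real.exp (-((n + 1) * γ * (ε - 2 * Var[u; π])))) := by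
  have hV : 0 ≤ 2 * γ * Var[u; π] :=
    mul_nonneg (mul_nonneg two_pos.le hγ.1) (variance_nonneg u π)
  have exp_meas : Measurable fun xs : Fin (n + 1) → X =>
      ENNReal.ofReal (Real.exp (γ * ∑ i, u (xs i))) := by fun_prop
  have event_le : {xs : Fin (n + 1) → X | (n + 1) * ε ≤ ∑ i, u (xs i)} ⊆
      {xs | ENNReal.ofReal (Real.exp (γ * ((n + 1) * ε))) ≤
        ENNReal.ofReal (Real.exp (γ * ∑ i, u (xs i)))} := fun xs hxs =>
    ENNReal.ofReal_le_ofReal (Real.exp_le_exp.2 (mul_le_mul_of_nonneg_left hxs hγ.1))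
  have exponent : Real.exp (2 * γ * Var[u; π]) ^ (n + 1) / Real.exp (γ * ((n + 1) * ε)) =
      Real.exp (-((n + 1) * γ * (ε - 2 * Var[u; π]))) := by
    rw [← Real.exp_nat_mul, ← Real.exp_sub]
    congr 1
    push_cast
    ring
  calc chainLaw κ μ n {xs | (n + 1) * ε ≤ ∑ i, u (xs i)}
      ≤ (∫⁻ xs, ENNReal.ofReal (Real.exp (γ * ∑ i, u (xs i))) ∂chainLaw κ μ n) /
          ENNReal.ofReal (Real.exp (γ * ((n + 1) * ε))) :=
        (measure_mono event_le).trans <| meas_ge_le_lintegral_div exp_meas.aemeasurable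
          (ENNReal.ofReal_pos.2 (Real.exp_pos _)).ne' ENNReal.ofReal_ne_top
    _ ≤ c * ENNReal.ofReal ((1 + 2 * γ * Var[u; π]) ^ (n + 1)) /
          ENNReal.ofReal (Real.exp (γ * ((n + 1) * ε))) := by
        gcongr
        exact hgap.lintegral_chainLaw_exp_sum_le hinv hμ hγ hu_meas hu hu_mean hu_le n
    _ = c * ENNReal.ofReal ((1 + 2 * γ * Var[u; π]) ^ (n + 1) /
          Real.exp (γ * ((n + 1) * ε))) := by
        rw [ENNReal.ofReal_div_of_pos (Real.exp_pos _), mul_div_assoc]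
    _ ≤ c * ENNReal.ofReal (Real.exp (-((n + 1) * γ * (ε - 2 * Var[u; π])))) := by
        rw [← exponent]
        gcongr
        exact (add_comm _ _).trans_le (Real.add_one_le_exp _)

lemma HasAbsSpectralGap.chainLaw_average_le_le (hgap : HasAbsSpectralGap κ π γ)
    (hinv : κ.Invariant π) (hμ : μ ≤ c • π) (hγ : γ ∈ Set.Icc 0 1) {G : X → ℝ}
    (hG_meas : Measurable G) (hG_nonneg : ∀ᵐ x ∂π, 0 ≤ G x) (hG : MemLp G 2 π)
    (hG_mean : 0 < ∫ x, G x ∂π) (n : ℕ) {s : ℝ} (hs : s ∈ Set.Icc 0 (1 / 2)) (β : ℝ) :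
    chainLaw κ μ n {xs | ((n : ℝ) + 1)⁻¹ * ∑ i, G (xs i) ≤ (1 - β) * ∫ x, G x ∂π} ≤
      c * ENNReal.ofReal (Real.exp (-((n + 1) * γ *
        (s * β - 2 * s ^ 2 * (Var[G; π] / (∫ x, G x ∂π) ^ 2))))) := by
  set m := ∫ x, G x ∂π with hm
  set u : X → ℝ := fun x => s * (1 - m⁻¹ * G x) with hu_def
  have hu : MemLp u 2 π := ((memLp_const 1).sub (hG.const_mul _)).const_mul s
  have hu_mean : ∫ x, u x ∂π = 0 := by
    rw [integral_const_mul, integral_sub (integrable_const 1)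
      ((hG.integrable one_le_two).const_mul _), integral_const_mul, ← hm,
      inv_mul_cancel₀ hG_mean.ne']
    simp
  have hu_le : ∀ᵐ x ∂π, u x ≤ 1 / 2 := hG_nonneg.mono fun x hx =>
    (mul_le_of_le_one_right hs.1 (sub_le_self 1 (by positivity))).trans hs.2
  have hu_var : Var[u; π] = s ^ 2 * (Var[G; π] / m ^ 2) := by
    rw [variance_const_mul, variance_const_sub (hG.const_mul _).aestronglyMeasurable,
      variance_const_mul, inv_pow, inv_mul_eq_div]
  have event_le : {xs : Fin (n + 1) → X | ((n : ℝ) + 1)⁻¹ * ∑ i, G (xs i) ≤ (1 - β) * m} ⊆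
      {xs | (n + 1) * (s * β) ≤ ∑ i, u (xs i)} := fun xs hxs => by
    have sum_le : m⁻¹ * ∑ i, G (xs i) ≤ (n + 1) * (1 - β) := by
      rw [Set.mem_ofPred_eq, inv_mul_le_iff₀ (by positivity)] at hxs
      rw [inv_mul_le_iff₀ hG_mean]
      linarith
    have sum_eq : ∑ i, u (xs i) = s * ((n + 1) - m⁻¹ * ∑ i, G (xs i)) := by
      simp [hu_def, ← Finset.mul_sum, Finset.sum_sub_distrib]
    rw [Set.mem_ofPred_eq, sum_eq]
    nlinarith [mul_le_mul_of_nonneg_left sum_le hs.1]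
  calc _ ≤ _ := measure_mono event_le
    _ ≤ c * ENNReal.ofReal (Real.exp (-((n + 1) * γ * (s * β - 2 * Var[u; π])))) :=
        hgap.chainLaw_le_sum_le hinv hμ hγ (by fun_prop) hu hu_mean hu_le n _
    _ = _ := by rw [hu_var, ← mul_assoc 2 (s ^ 2)]

-- `s = β / (4 χ²)` maximizes `s β - 2 s² χ²`; past `1 / 10` the value `s = 1 / 10` suffices.
lemma exists_half_min_le_mul_sub {χ : ℝ} (hχ : 0 < χ) (β : ℝ) : ∃ s ∈ Set.Icc (0 : ℝ) (1 / 2),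
    1 / 2 * min ((β / (2 * χ) - 1 / 4) ^ 2) ((β - χ / 2) / 10) ≤
      s * β - 2 * s ^ 2 * χ ^ 2 := by
  have min_le_sq := min_le_left ((β / (2 * χ) - 1 / 4) ^ 2) ((β - χ / 2) / 10)
  have min_le_lin := min_le_right ((β / (2 * χ) - 1 / 4) ^ 2) ((β - χ / 2) / 10)
  rcases lt_or_ge β (χ / 2) with hβ | hβ
  · exact ⟨0, by norm_num, by linarith⟩
  have hβ_pos : 0 < β := by linarith
  rcases le_total (β / (4 * χ ^ 2)) (1 / 10) with hs | hs
  · refine ⟨β / (4 * χ ^ 2), ⟨by positivity, by linarith⟩, ?_⟩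
    have optimum : β / (4 * χ ^ 2) * β - 2 * (β / (4 * χ ^ 2)) ^ 2 * χ ^ 2 =
        1 / 2 * (β / (2 * χ)) ^ 2 := by field_simp; ring
    have ratio_ge : 1 / 4 ≤ β / (2 * χ) := by
      rw [le_div_iff₀ (by positivity)]
      linarith
    rw [optimum]
    nlinarith
  · refine ⟨1 / 10, by norm_num, ?_⟩
    rw [le_div_iff₀ (by positivity)] at hs
    linarith

end Concentration

theorem stmt17_general {X : Type*} [MeasurableSpace X] (κ : Kernel X X) [IsMarkovKernel κ]
    (π μ : Measure X) [IsProbabilityMeasure π] {γ : ℝ} (hγ : γ ∈ Set.Icc (0 : ℝ) 1)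
    (hinv : κ.Invariant π) (hgap : HasAbsSpectralGap κ π γ) {W : ℝ} (hwarm : IsWarm μ π W)
    (n : ℕ) {G : X → ℝ} (hG_meas : Measurable G) (hG_nonneg : ∀ᵐ x ∂π, 0 ≤ G x)
    (hG : MemLp G 2 π) (hG_mean : 0 < ∫ x, G x ∂π)
    (hG_var : 0 < (∫ x, (G x) ^ 2 ∂π) - (∫ x, G x ∂π) ^ 2) {χ : ℝ}
    (hχ : χ = Real.sqrt ((∫ x, (G x) ^ 2 ∂π) - (∫ x, G x ∂π) ^ 2) / ∫ x, G x ∂π) (β : ℝ) :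
    (chainLaw κ μ n) {xs | (((n : ℝ) + 1))⁻¹ * (∑ i, G (xs i)) ≤ (1 - β) * ∫ x, G x ∂π} ≤
      ENNReal.ofReal (W * Real.exp (-(((n : ℝ) + 1) * γ / 2) *
        min ((β / (2 * χ) - 1 / 4) ^ 2) ((β - χ / 2) / 10))) := by
  have hχ_pos : 0 < χ := hχ ▸ div_pos (Real.sqrt_pos.2 hG_var) hG_mean
  have hχ_sq : Var[G; π] / (∫ x, G x ∂π) ^ 2 = χ ^ 2 := by
    rw [hχ, div_pow, Real.sq_sqrt hG_var.le, variance_eq_sub hG]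
    simp only [Pi.pow_apply]
  obtain ⟨s, hs, half_min_le⟩ := exists_half_min_le_mul_sub hχ_pos β
  have hPγ : 0 ≤ ((n : ℝ) + 1) * γ := mul_nonneg (by positivity) hγ.1
  refine (hgap.chainLaw_average_le_le hinv hwarm.le_smul hγ hG_meas hG_nonneg hG hG_mean n hs
    β).trans ?_
  rw [ENNReal.ofReal_mul' (Real.exp_nonneg _), hχ_sq]
  gcongr
  linarith [mul_le_mul_of_nonneg_left half_min_le hPγ]

theorem stmt17 {X : Type*} [MeasurableSpace X] (K : X → Measure X) (π μt : Measure X)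
    (hK : ∀ x, IsProbabilityMeasure (K x)) (hKmeas : Measurable K)
    [IsProbabilityMeasure π] [IsProbabilityMeasure μt]
    (γ : ℝ) (hγ : γ ∈ Set.Ioc (0 : ℝ) 1)
    (hrev : Reversible K π) (hgap : HasAbsSpectralGap K π γ)
    (W : ℝ) (hW : 1 ≤ W) (hwarm : IsWarm μt π W)
    (n : ℕ) -- the chain has length `P = n + 1 ≥ 1`
    (G : X → ℝ) (hGmeas : Measurable G) (hGnonneg : ∀ x, 0 ≤ G x)
    (hGL2 : MemLp G 2 π) (hGmean : 0 < ∫ x, G x ∂π)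
    (hGvar : 0 < (∫ x, (G x) ^ 2 ∂π) - (∫ x, G x ∂π) ^ 2)
    (χ : ℝ)
    (hχ : χ = Real.sqrt ((∫ x, (G x) ^ 2 ∂π) - (∫ x, G x ∂π) ^ 2) / ∫ x, G x ∂π) :
    ∀ β : ℝ, β ∈ Set.Ioo (0 : ℝ) 1 → χ / 2 ≤ β →
      (chainLaw K μt n)
          {xs | (((n : ℝ) + 1))⁻¹ * (∑ i, G (xs i)) ≤ (1 - β) * ∫ x, G x ∂π} ≤
        ENNReal.ofReal
          (W * Real.exp (-(((n : ℝ) + 1) * γ / 2) *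
            min ((β / (2 * χ) - 1 / 4) ^ 2) ((β - χ / 2) / 10))) := by
  have : IsMarkovKernel (⟨K, hKmeas⟩ : Kernel X X) := ⟨hK⟩
  have hinv : Kernel.Invariant ⟨K, hKmeas⟩ π :=
    Kernel.IsReversible.invariant fun A B hA hB => hrev A B hA hB
  exact fun β _ _ => stmt17_general ⟨K, hKmeas⟩ π μt (Set.Ioc_subset_Icc_self hγ) hinv hgap hwarm
    n hGmeas (ae_of_all _ hGnonneg) hGL2 hGmean hGvar hχ β
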